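/- arXiv:1903.06199 — 3 statements merged into one kernel-verified Lean document; each statement's English description precedes it below -/
import Mathlib

section
/- For all real numbers s > 0, b > 0 and a ∈ ℝ, one has ∫_0^∞ t^(s-1) e^(-t b^2) (∫_0^a √(t/π) e^(-t u^2) du) dt = (Γ(s+1/2)/√π) · ∫_0^a (u^2+b^2)^(-(s+1/2)) du, where the inner integral ∫_0^a is the (oriented) interval integral from 0 to a. -/
open MeasureTheory Real intervalIntegral

theorem integrableOn_rpow_mul_exp_neg_mul_Ioi {r c : ℝ} (hr : 0 < r) (hc : 0 < c) :
    IntegrableOn (fun t : ℝ => t ^ (r - 1) * exp (-(c * t))) (Set.Ioi 0) := by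
  simpa only [rpow_one, neg_mul] using
    integrableOn_rpow_mul_exp_neg_mul_rpow (p := 1) (s := r - 1) (by linarith) one_pos hc

theorem integral_rpow_mul_exp_neg_mul_Ioi_eq_rpow_neg {r c : ℝ} (hr : 0 < r) (hc : 0 < c) :
    ∫ t in Set.Ioi (0 : ℝ), t ^ (r - 1) * exp (-(c * t)) = Gamma r * c ^ (-r) := by
  rw [integral_rpow_mul_exp_neg_mul_Ioi hr hc, one_div, inv_rpow hc.le, ← rpow_neg hc.le, mul_comm]

/- The integrand is nonnegative, so by Tonelli its integrability is that of the inner Gamma integral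
`Γ(r) g(x)^(-r)`. -/
theorem integrable_prod_rpow_mul_exp_neg_mul {α : Type*} [MeasurableSpace α] {μ : Measure α}
    [SFinite μ] {g : α → ℝ} {r : ℝ} (hr : 0 < r) (hg : AEMeasurable g μ)
    (hg_pos : ∀ᵐ x ∂μ, 0 < g x) (hg_int : Integrable (fun x => g x ^ (-r)) μ) :
    Integrable (fun z : α × ℝ => z.2 ^ (r - 1) * exp (-(g z.1 * z.2)))
      (μ.prod (volume.restrict (Set.Ioi 0))) := by
  have hmeas : AEStronglyMeasurable (fun z : α × ℝ => z.2 ^ (r - 1) * exp (-(g z.1 * z.2)))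
      (μ.prod (volume.restrict (Set.Ioi 0))) := by
    have : AEMeasurable (fun z : α × ℝ => g z.1) (μ.prod (volume.restrict (Set.Ioi 0))) :=
      hg.comp_fst
    exact AEMeasurable.aestronglyMeasurable (by fun_prop)
  refine (integrable_prod_iff hmeas).2 ⟨?_, (hg_int.const_mul (Gamma r)).congr ?_⟩
  · filter_upwards [hg_pos] with x hx using integrableOn_rpow_mul_exp_neg_mul_Ioi hr hx
  · filter_upwards [hg_pos] with x hx
    rw [← integral_rpow_mul_exp_neg_mul_Ioi_eq_rpow_neg hr hx]
    refine setIntegral_congr_fun measurableSet_Ioi fun t ht => ?_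
    have ht : 0 < t := ht
    exact (norm_of_nonneg (by positivity)).symm

theorem integral_Ioi_intervalIntegral_rpow_mul_exp_neg_mul {g : ℝ → ℝ} {r c d : ℝ} (hr : 0 < r)
    (hg : AEMeasurable g (volume.restrict (Set.uIoc c d)))
    (hg_pos : ∀ᵐ u ∂volume.restrict (Set.uIoc c d), 0 < g u)
    (hg_int : IntervalIntegrable (fun u => g u ^ (-r)) volume c d) :
    ∫ t in Set.Ioi (0 : ℝ), ∫ u in c..d, t ^ (r - 1) * exp (-(g u * t)) =
      Gamma r * ∫ u in c..d, g u ^ (-r) := by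
  have hprod := integrable_prod_rpow_mul_exp_neg_mul hr hg hg_pos hg_int.def'
  calc ∫ t in Set.Ioi (0 : ℝ), ∫ u in c..d, t ^ (r - 1) * exp (-(g u * t))
      = ∫ u in c..d, ∫ t in Set.Ioi (0 : ℝ), t ^ (r - 1) * exp (-(g u * t)) :=
        (intervalIntegral_integral_swap hprod).symm
    _ = ∫ u in c..d, Gamma r * g u ^ (-r) := by
        refine integral_congr_ae_restrict ?_
        filter_upwards [hg_pos] with u hu
        exact integral_rpow_mul_exp_neg_mul_Ioi_eq_rpow_neg hr hu
    _ = Gamma r * ∫ u in c..d, g u ^ (-r) := integral_const_mul _ _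

theorem rpow_mul_exp_neg_mul_mul_sqrt_div {t : ℝ} (ht : 0 < t) (s p x y : ℝ) :
    t ^ (s - 1) * exp (-(t * x)) * (√(t / p) * exp (-(t * y))) =
      (√p)⁻¹ * (t ^ (s + 1 / 2 - 1) * exp (-((y + x) * t))) := by
  have hpow : t ^ (s + 1 / 2 - 1) = t ^ (s - 1) * √t := by
    rw [sqrt_eq_rpow, ← rpow_add ht]
    ring_nf
  have hexp : exp (-((y + x) * t)) = exp (-(t * x)) * exp (-(t * y)) := by
    rw [← exp_add]
    ring_nf
  rw [hpow, hexp, sqrt_div ht.le]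
  ring

theorem ae_sq_add_sq_pos (b : ℝ) : ∀ᵐ u : ℝ, 0 < u ^ 2 + b ^ 2 := by
  filter_upwards [Measure.ae_ne volume 0] with u hu
  positivity

theorem intervalIntegrable_sq_add_sq_rpow {b : ℝ} (hb : b ≠ 0) (r c d : ℝ) :
    IntervalIntegrable (fun u : ℝ => (u ^ 2 + b ^ 2) ^ r) volume c d := by
  have hcont : Continuous fun u : ℝ => u ^ 2 + b ^ 2 := by fun_prop
  exact (hcont.rpow_const fun u => .inl (by positivity)).intervalIntegrable c d

theorem iterated_integral_gamma_general {s b c d : ℝ} (hs : -(1 / 2) < s)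
    (hint : IntervalIntegrable (fun u : ℝ => (u ^ 2 + b ^ 2) ^ (-(s + 1 / 2))) volume c d) :
    ∫ t in Set.Ioi (0 : ℝ),
        t ^ (s - 1) * exp (-(t * b ^ 2)) * ∫ u in c..d, √(t / π) * exp (-(t * u ^ 2)) =
      (Gamma (s + 1 / 2) / √π) * ∫ u in c..d, (u ^ 2 + b ^ 2) ^ (-(s + 1 / 2)) := by
  have hfactor : ∀ t ∈ Set.Ioi (0 : ℝ),
      t ^ (s - 1) * exp (-(t * b ^ 2)) * ∫ u in c..d, √(t / π) * exp (-(t * u ^ 2)) =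
        (√π)⁻¹ * ∫ u in c..d, t ^ (s + 1 / 2 - 1) * exp (-((u ^ 2 + b ^ 2) * t)) := by
    intro t ht
    simp only [← intervalIntegral.integral_const_mul, rpow_mul_exp_neg_mul_mul_sqrt_div ht]
  rw [setIntegral_congr_fun measurableSet_Ioi hfactor, MeasureTheory.integral_const_mul,
    integral_Ioi_intervalIntegral_rpow_mul_exp_neg_mul (by linarith) (by fun_prop)
      (ae_restrict_of_ae (ae_sq_add_sq_pos b)) hint]
  ring

/-- For `s > 0`, `b > 0` and `a ∈ ℝ`,
`∫_0^∞ t^(s-1) e^(-t b²) (∫_0^a √(t/π) e^(-t u²) du) dt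
  = (Γ(s+1/2)/√π) · ∫_0^a (u²+b²)^(-(s+1/2)) du`. -/
theorem iterated_integral_gamma (s b a : ℝ) (hs : 0 < s) (hb : 0 < b) :
    ∫ t in Set.Ioi (0 : ℝ),
        t ^ (s - 1) * Real.exp (-(t * b ^ 2)) *
          ∫ u in (0 : ℝ)..a, Real.sqrt (t / Real.pi) * Real.exp (-(t * u ^ 2)) =
      (Real.Gamma (s + 1 / 2) / Real.sqrt Real.pi) *
        ∫ u in (0 : ℝ)..a, (u ^ 2 + b ^ 2) ^ (-(s + 1 / 2)) :=
  iterated_integral_gamma_general (by linarith) (intervalIntegrable_sq_add_sq_rpow hb.ne' _ 0 a)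
end

section
/- Let a ∈ ℝ and b > 0, and define F : ℝ → ℝ by F(s) = (2 Γ(s+1/2)/(√π · Γ(s))) · ∫_0^a (u^2+b^2)^(-(s+1/2)) du, where 1/Γ(0) is interpreted as 0 (consistently with the convention Γ(0) = 0 for the real Gamma function, under which F(0) = 0). Then F is differentiable at s = 0 with derivative F'(0) = 2 log((a + √(a^2+b^2))/b). -/
open Real intervalIntegral

/-!
Since `1 / Γ` has a simple zero at `0` with derivative `1`, the derivative at `0` of a product
`(1 / Γ) * g` is `g 0` as soon as `g` is continuous there: no derivative of the integral in `s` is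
needed. At `s = 0` the factor `2 Γ(s + 1/2) / √π` equals `2`, and the integral is
`∫ u in 0..a, 1 / √(u² + b²) = arsinh (a / b)`.
-/

section ProductRule

variable {𝕜 𝕜' E : Type*} [NontriviallyNormedField 𝕜] [NormedRing 𝕜'] [NormedAlgebra 𝕜 𝕜']
  [NormedAddCommGroup E] [NormedSpace 𝕜 E] [Module 𝕜' E] [IsBoundedSMul 𝕜' E]
  [IsScalarTower 𝕜 𝕜' E]

theorem hasDerivAt_smul_of_eq_zero_of_continuousAt {c : 𝕜 → 𝕜'} {c' : 𝕜'} {f : 𝕜 → E} {x : 𝕜}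
    (hc : HasDerivAt c c' x) (hcx : c x = 0) (hf : ContinuousAt f x) :
    HasDerivAt (fun y => c y • f y) (c' • f x) x := by
  rw [hasDerivAt_iff_tendsto_slope] at hc ⊢
  refine (hc.smul (hf.tendsto.mono_left nhdsWithin_le_nhds)).congr fun y => ?_
  simp only [slope_def_module, hcx, sub_zero, zero_smul, smul_assoc]

end ProductRule

section Gamma

theorem inv_Gamma_eq_self_mul_inv_Gamma_add_one (s : ℝ) :
    (Gamma s)⁻¹ = s * (Gamma (s + 1))⁻¹ := by
  rcases eq_or_ne s 0 with rfl | hs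
  · rw [Gamma_zero, inv_zero, zero_mul]
  · rw [Gamma_add_one hs, mul_inv, mul_inv_cancel_left₀ hs]

theorem continuousAt_Gamma_of_pos {s : ℝ} (hs : 0 < s) : ContinuousAt Gamma s :=
  (differentiableOn_Gamma_Ioi.differentiableAt (Ioi_mem_nhds hs)).continuousAt

theorem hasDerivAt_inv_Gamma_neg_nat (n : ℕ) :
    HasDerivAt (fun s : ℝ => (Gamma s)⁻¹) ((-1) ^ n * n.factorial) (-n) := by
  induction n with
  | zero =>
    have hcont : ContinuousAt (fun s : ℝ => (Gamma (s + 1))⁻¹) 0 := by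
      refine ContinuousAt.inv₀ (ContinuousAt.comp' ?_ (by fun_prop)) (by simp)
      exact continuousAt_Gamma_of_pos (by norm_num)
    rw [funext inv_Gamma_eq_self_mul_inv_Gamma_add_one]
    simpa using hasDerivAt_smul_of_eq_zero_of_continuousAt (hasDerivAt_id (0 : ℝ)) rfl hcont
  | succ n ih =>
    have hshift : -((n + 1 : ℕ) : ℝ) + 1 = -n := by push_cast; ring
    have hzero : (Gamma (-((n + 1 : ℕ) : ℝ) + 1))⁻¹ = 0 := by
      rw [hshift, Gamma_neg_nat_eq_zero, inv_zero]
    have hderiv : HasDerivAt (fun s : ℝ => (Gamma (s + 1))⁻¹) ((-1) ^ n * n.factorial)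
        (-((n + 1 : ℕ) : ℝ)) := (hshift ▸ ih).comp_add_const _ 1
    rw [funext inv_Gamma_eq_self_mul_inv_Gamma_add_one]
    convert! hasDerivAt_smul_of_eq_zero_of_continuousAt hderiv hzero continuousAt_id using 1
    · simp only [smul_eq_mul, id, mul_comm]
    · simp only [smul_eq_mul, id, Nat.factorial_succ]
      push_cast
      ring

end Gamma

section Arsinh

variable {c : ℝ}

theorem sqrt_one_add_div_sq (hc : 0 < c) (x : ℝ) : √(1 + (x / c) ^ 2) = √(x ^ 2 + c ^ 2) / c := by
  have hscale : 1 + (x / c) ^ 2 = (x ^ 2 + c ^ 2) / c ^ 2 := by field_simp; ring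
  rw [hscale, sqrt_div (by positivity), sqrt_sq hc.le]

theorem arsinh_div (hc : 0 < c) (x : ℝ) : arsinh (x / c) = log ((x + √(x ^ 2 + c ^ 2)) / c) := by
  rw [arsinh, sqrt_one_add_div_sq hc, add_div]

theorem hasDerivAt_arsinh_div (hc : 0 < c) (x : ℝ) :
    HasDerivAt (fun u => arsinh (u / c)) (√(x ^ 2 + c ^ 2))⁻¹ x := by
  convert ((hasDerivAt_id' x).div_const c).arsinh using 1
  rw [sqrt_one_add_div_sq hc, smul_eq_mul]
  field_simp

theorem integral_inv_sqrt_sq_add_sq (hc : 0 < c) (x y : ℝ) :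
    ∫ u in x..y, (√(u ^ 2 + c ^ 2))⁻¹ = arsinh (y / c) - arsinh (x / c) := by
  have hcont : Continuous fun u : ℝ => (√(u ^ 2 + c ^ 2))⁻¹ :=
    Continuous.inv₀ (by fun_prop) fun u => by positivity
  exact integral_eq_sub_of_hasDerivAt (fun u _ => hasDerivAt_arsinh_div hc u)
    (hcont.intervalIntegrable x y)

theorem integral_sq_add_sq_rpow_neg_half (hc : 0 < c) (x y : ℝ) :
    ∫ u in x..y, (u ^ 2 + c ^ 2) ^ (-(1 / 2) : ℝ) = arsinh (y / c) - arsinh (x / c) := by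
  have hrpow (u : ℝ) : (u ^ 2 + c ^ 2) ^ (-(1 / 2) : ℝ) = (√(u ^ 2 + c ^ 2))⁻¹ := by
    rw [rpow_neg (by positivity), sqrt_eq_rpow]
  simp only [hrpow, integral_inv_sqrt_sq_add_sq hc]

end Arsinh

open MeasureTheory in
theorem continuous_intervalIntegral_rpow {μ : Measure ℝ} [IsLocallyFiniteMeasure μ]
    [NullSingletonClass μ] {f : ℝ → ℝ} (hf : Continuous f) (hf₀ : ∀ u, f u ≠ 0) (x y : ℝ) :
    Continuous fun r : ℝ => ∫ u in x..y, f u ^ r ∂μ :=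
  continuous_parametric_intervalIntegral_of_continuous'
    ((hf.comp continuous_snd).rpow continuous_fst fun p => Or.inl (hf₀ p.2)) x y

/-- For `a ∈ ℝ` and `b > 0`, the function
`F(s) = (2 Γ(s+1/2)/(√π · Γ(s))) · ∫_0^a (u²+b²)^(-(s+1/2)) du`
(with `1/Γ(0) = 0`, the convention built into `Real.Gamma 0 = 0` and division by zero)
is differentiable at `s = 0` with derivative `2 log((a + √(a²+b²))/b)`. -/
theorem hasDerivAt_zeta_difference (a b : ℝ) (hb : 0 < b) :
    HasDerivAt
      (fun s : ℝ =>
        2 * Real.Gamma (s + 1 / 2) / (Real.sqrt Real.pi * Real.Gamma s) *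
          ∫ u in (0 : ℝ)..a, (u ^ 2 + b ^ 2) ^ (-(s + 1 / 2)))
      (2 * Real.log ((a + Real.sqrt (a ^ 2 + b ^ 2)) / b)) 0 := by
  let I : ℝ → ℝ := fun r => ∫ u in (0 : ℝ)..a, (u ^ 2 + b ^ 2) ^ r
  have hI : I (-(1 / 2)) = log ((a + √(a ^ 2 + b ^ 2)) / b) := by
    simp only [I, integral_sq_add_sq_rpow_neg_half hb, arsinh_div hb a, zero_div, arsinh_zero,
      sub_zero]
  have hinv : HasDerivAt (fun s : ℝ => (Gamma s)⁻¹) 1 0 := by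
    simpa using hasDerivAt_inv_Gamma_neg_nat 0
  have hcont : ContinuousAt (fun s => 2 * Gamma (s + 1 / 2) / √π * I (-(s + 1 / 2))) 0 := by
    have hΓ : ContinuousAt (fun s : ℝ => Gamma (s + 1 / 2)) 0 :=
      ContinuousAt.comp' (continuousAt_Gamma_of_pos (by norm_num)) (by fun_prop)
    have hI_cont : Continuous I :=
      continuous_intervalIntegral_rpow (by fun_prop) (fun u => by positivity) 0 a
    fun_prop
  convert! hasDerivAt_smul_of_eq_zero_of_continuousAt hinv (by simp) hcont using 1
  · ext s
    simp only [I, smul_eq_mul, div_eq_mul_inv, mul_inv]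
    ring
  · rw [zero_add, hI, Gamma_one_half_eq, mul_div_cancel_right₀ _ (by positivity), one_smul]
end

section
/- For every integer ℓ ≥ 2, c(ℓ)/c(2) = b(ℓ)/b(2), where b(ℓ) := (1/(2ℓ+2)) · ∏_{k=−ℓ}^{ℓ−1} ( (√((ℓ+1)^2+ℓ^2−k^2) − k − 1)/(√((ℓ+1)^2+ℓ^2−(k+1)^2) − k) )^(1/2) and c(ℓ) := ( ∏_{j=1}^{ℓ−1} (√((ℓ+1)^2+ℓ^2−j^2) + ℓ) / ∏_{j=1}^{ℓ} (√((ℓ+1)^2+ℓ^2−j^2) + ℓ + 1) ) · ( (√((ℓ+1)^2+ℓ^2) + ℓ)/(√((ℓ+1)^2+ℓ^2) + ℓ + 1) )^(1/2), with k ranging over integers and j over positive integers. -/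
open Real Finset

/-- The quantity `b(ℓ)` of equation (int.6c). -/
noncomputable def bConst (ℓ : ℕ) : ℝ :=
  (1 / (2 * (ℓ : ℝ) + 2)) *
    ∏ k ∈ Finset.Icc (-(ℓ : ℤ)) ((ℓ : ℤ) - 1),
      ((Real.sqrt (((ℓ : ℝ) + 1) ^ 2 + (ℓ : ℝ) ^ 2 - (k : ℝ) ^ 2) - k - 1) /
          (Real.sqrt (((ℓ : ℝ) + 1) ^ 2 + (ℓ : ℝ) ^ 2 - ((k : ℝ) + 1) ^ 2) - k)) ^
        ((1 : ℝ) / 2)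

/-- The quantity `c(ℓ)` of equation (int.6c). -/
noncomputable def cConst (ℓ : ℕ) : ℝ :=
  ((∏ j ∈ Finset.Icc 1 (ℓ - 1),
        (Real.sqrt (((ℓ : ℝ) + 1) ^ 2 + (ℓ : ℝ) ^ 2 - (j : ℝ) ^ 2) + ℓ)) /
      (∏ j ∈ Finset.Icc 1 ℓ,
        (Real.sqrt (((ℓ : ℝ) + 1) ^ 2 + (ℓ : ℝ) ^ 2 - (j : ℝ) ^ 2) + ℓ + 1))) *
    ((Real.sqrt (((ℓ : ℝ) + 1) ^ 2 + (ℓ : ℝ) ^ 2) + ℓ) /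
        (Real.sqrt (((ℓ : ℝ) + 1) ^ 2 + (ℓ : ℝ) ^ 2) + ℓ + 1)) ^ ((1 : ℝ) / 2)

/-!
Write `h k` for `√((ℓ + 1) ^ 2 + ℓ ^ 2 - k ^ 2)`, an even function of `k`. Since `(k, h k)` and
`(k + 1, h (k + 1))` lie on one circle,
`(h k - k - 1) * (h k + k + 1) = (h (k + 1) - k) * (h (k + 1) + k)`,
so the quotients in `bConst ℓ` are invariant under `k ↦ -(k + 1)`, and pairing these two indices
removes the square roots of the factors. Both sides of the displayed identity equal
`2 * (ℓ - k) * (ℓ + k + 1)`; regrouping the remaining product so that each `h j` occurs in a single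
factor, the circle equation turns that factor into `(h j + ℓ) / (h j + ℓ + 1)` for `0 < j < ℓ`. At
`j = 0` only `h 0 + 1` occurs instead of its square, which accounts for the square root in
`cConst ℓ` and gives `cConst ℓ = √2 * bConst ℓ`.
-/

theorem prod_Ico_neg_natCast {M : Type*} [CommMonoid M] (f : ℤ → M) (n : ℕ) :
    ∏ k ∈ Ico (-(n : ℤ)) n, f k = ∏ i ∈ range n, f i * f (-(i + 1)) := by
  induction n with
  | zero => simp
  | succ n ih =>
    have Ico_succ : Ico (-((n + 1 : ℕ) : ℤ)) (n + 1 : ℕ) =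
        insert (n : ℤ) (insert (-(n + 1 : ℤ)) (Ico (-(n : ℤ)) n)) := by
      ext k
      simp only [mem_Ico, mem_insert]
      omega
    rw [Ico_succ, prod_insert (by simp only [mem_insert, mem_Ico]; omega),
      prod_insert (by simp only [mem_Ico]; omega), prod_range_succ, ih, ← mul_assoc, mul_comm]

/-- The ordinate at abscissa `x` of the upper half of the circle of squared radius
`(ℓ + 1) ^ 2 + ℓ ^ 2`. Its values at integers are the square roots in `bConst` and `cConst`. -/
noncomputable def circleHeight (ℓ x : ℝ) : ℝ :=
  √((ℓ + 1) ^ 2 + ℓ ^ 2 - x ^ 2)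

section CircleHeight

variable {ℓ x : ℝ}

theorem circleHeight_neg (ℓ x : ℝ) : circleHeight ℓ (-x) = circleHeight ℓ x := by
  rw [circleHeight, circleHeight, neg_sq]

theorem circleHeight_self (hℓ : 0 ≤ ℓ + 1) : circleHeight ℓ ℓ = ℓ + 1 := by
  rw [circleHeight, add_sub_cancel_right, sqrt_sq hℓ]

theorem add_one_le_circleHeight (hx : |x| ≤ ℓ) : ℓ + 1 ≤ circleHeight ℓ x :=
  le_sqrt_of_sq_le (by linarith [sq_le_sq' (neg_le_of_abs_le hx) (le_of_abs_le hx)])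

theorem circleHeight_sq (hx : |x| ≤ ℓ) :
    circleHeight ℓ x ^ 2 = (ℓ + 1) ^ 2 + ℓ ^ 2 - x ^ 2 :=
  sq_sqrt (by linarith [sq_le_sq' (neg_le_of_abs_le hx) (le_of_abs_le hx), sq_nonneg (ℓ + 1)])

theorem circleHeight_sub_mul_circleHeight_add (hx : |x| ≤ ℓ) :
    (circleHeight ℓ x - x - 1) * (circleHeight ℓ x + x + 1) = 2 * (ℓ - x) * (ℓ + x + 1) := by
  linear_combination circleHeight_sq hx

theorem div_circleHeight_sub_mul_div_circleHeight_add (hx : |x| ≤ ℓ) :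
    2 * (ℓ + 1 - x) / (circleHeight ℓ x - x + 1) * ((ℓ + 1 + x) / (circleHeight ℓ x + x + 1)) =
      (circleHeight ℓ x + ℓ) / (circleHeight ℓ x + ℓ + 1) := by
  have height_ge := add_one_le_circleHeight hx
  have numerator_eq : 2 * (ℓ + 1 - x) * (ℓ + 1 + x) =
      2 * (circleHeight ℓ x - ℓ) * (circleHeight ℓ x + ℓ) := by
    linear_combination -2 * circleHeight_sq hx
  have denominator_eq : (circleHeight ℓ x - x + 1) * (circleHeight ℓ x + x + 1) =
      2 * (circleHeight ℓ x - ℓ) * (circleHeight ℓ x + ℓ + 1) := by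
    linear_combination -circleHeight_sq hx
  rw [div_mul_div_comm, numerator_eq, denominator_eq, mul_div_mul_left]
  linarith

theorem sqrt_circleHeight_zero_div (hℓ : 0 ≤ ℓ) :
    √((circleHeight ℓ 0 + ℓ) / (circleHeight ℓ 0 + ℓ + 1)) =
      √2 * ((ℓ + 1) / (circleHeight ℓ 0 + 1)) := by
  have abs_zero_le : |(0 : ℝ)| ≤ ℓ := by rwa [abs_zero]
  have height_ge := add_one_le_circleHeight abs_zero_le
  rw [← div_circleHeight_sub_mul_div_circleHeight_add abs_zero_le, sub_zero, sub_zero, add_zero,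
    add_zero, mul_div_assoc, mul_assoc, sqrt_mul zero_le_two,
    sqrt_mul_self (div_nonneg (by linarith) (by linarith))]

end CircleHeight

/-- The quotient whose square root is the factor of `bConst ℓ` with index `x`. -/
noncomputable def bFactor (ℓ x : ℝ) : ℝ :=
  (circleHeight ℓ x - x - 1) / (circleHeight ℓ (x + 1) - x)

section BFactor

variable {ℓ x : ℝ}

theorem bFactor_nonneg (hx : |x| ≤ ℓ) (hx' : |x + 1| ≤ ℓ) : 0 ≤ bFactor ℓ x :=
  div_nonneg (by linarith [add_one_le_circleHeight hx, le_of_abs_le hx])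
    (by linarith [add_one_le_circleHeight hx', le_of_abs_le hx])

theorem bFactor_neg_add_one (hx : |x| ≤ ℓ) (hx' : |x + 1| ≤ ℓ) :
    bFactor ℓ (-(x + 1)) = bFactor ℓ x := by
  have x_le := le_of_abs_le hx
  have neg_le_x := neg_le_of_abs_le hx
  have height_ge := add_one_le_circleHeight hx
  have height_ge' := add_one_le_circleHeight hx'
  rw [bFactor, bFactor, show -(x + 1) + 1 = -x by ring, circleHeight_neg, circleHeight_neg,
    div_eq_div_iff (by linarith) (by linarith)]
  linear_combination circleHeight_sq hx' - circleHeight_sq hx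

theorem bFactor_eq_div_mul_div (hx : |x| ≤ ℓ) :
    bFactor ℓ x = 2 * (ℓ - x) / (circleHeight ℓ (x + 1) - x) *
      ((ℓ + x + 1) / (circleHeight ℓ x + x + 1)) := by
  have denominator_ne_zero : circleHeight ℓ x + x + 1 ≠ 0 := by
    linarith [add_one_le_circleHeight hx, neg_le_of_abs_le hx]
  rw [bFactor, div_mul_div_comm, ← circleHeight_sub_mul_circleHeight_add hx,
    mul_div_mul_right _ _ denominator_ne_zero]

theorem prod_range_add_one_bFactor {n : ℕ} (hn : n ≤ ℓ) :
    ∏ i ∈ range (n + 1), bFactor ℓ i =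
      2 * (ℓ - n) / (circleHeight ℓ (n + 1) - n) * ((ℓ + 1) / (circleHeight ℓ 0 + 1)) *
        ∏ j ∈ Icc 1 n, (circleHeight ℓ j + ℓ) / (circleHeight ℓ j + ℓ + 1) := by
  have abs_n_le : |(n : ℝ)| ≤ ℓ := by rwa [Nat.abs_cast]
  induction n with
  | zero => simpa using bFactor_eq_div_mul_div abs_n_le
  | succ n ih =>
    have n_le : (n : ℝ) ≤ ℓ := (Nat.cast_le.mpr n.le_succ).trans hn
    rw [prod_range_succ, ih n_le (by rwa [Nat.abs_cast]), bFactor_eq_div_mul_div abs_n_le,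
      prod_Icc_succ_top (by omega), ← div_circleHeight_sub_mul_div_circleHeight_add abs_n_le]
    push_cast
    ring

end BFactor

theorem bConst_eq_prod_range (ℓ : ℕ) :
    bConst ℓ = 1 / (2 * ℓ + 2) * ∏ i ∈ range ℓ, bFactor ℓ i := by
  have pair_eq : ∀ i ∈ range ℓ,
      √(bFactor ℓ (i : ℤ)) * √(bFactor ℓ (-(i + 1) : ℤ)) = bFactor ℓ i := fun i hi ↦ by
    have i_lt : i < ℓ := mem_range.mp hi
    have abs_i_le : |(i : ℝ)| ≤ ℓ := by
      rw [Nat.abs_cast]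
      exact_mod_cast i_lt.le
    have abs_add_one_le : |(i + 1 : ℝ)| ≤ ℓ := by
      rw [abs_of_nonneg (by positivity)]
      exact_mod_cast i_lt
    push_cast
    rw [bFactor_neg_add_one abs_i_le abs_add_one_le,
      mul_self_sqrt (bFactor_nonneg abs_i_le abs_add_one_le)]
  calc bConst ℓ = 1 / (2 * ℓ + 2) * ∏ k ∈ Ico (-(ℓ : ℤ)) ℓ, √(bFactor ℓ k) := by
        simp only [bConst, bFactor, circleHeight, sqrt_eq_rpow, Icc_sub_one_right_eq_Ico]
    _ = 1 / (2 * ℓ + 2) * ∏ i ∈ range ℓ, bFactor ℓ i := by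
        rw [prod_Ico_neg_natCast, prod_congr rfl pair_eq]

theorem bConst_eq_prod_Icc {ℓ : ℕ} (hℓ : 1 ≤ ℓ) :
    bConst ℓ = 1 / (2 * (circleHeight ℓ 0 + 1)) *
      ∏ j ∈ Icc 1 (ℓ - 1), (circleHeight ℓ j + ℓ) / (circleHeight ℓ j + ℓ + 1) := by
  have pred_cast : ((ℓ - 1 : ℕ) : ℝ) = ℓ - 1 := Nat.cast_pred hℓ
  have top_factor_eq_one :
      2 * (ℓ - (ℓ - 1) : ℝ) / (circleHeight ℓ (ℓ - 1 + 1) - (ℓ - 1)) = 1 := by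
    rw [sub_add_cancel, circleHeight_self (by positivity)]
    ring
  have prod_eq := prod_range_add_one_bFactor (pred_cast.trans_le (sub_one_lt (ℓ : ℝ)).le)
  rw [Nat.sub_add_cancel hℓ, pred_cast, top_factor_eq_one, one_mul] at prod_eq
  rw [bConst_eq_prod_range, prod_eq]
  field_simp

theorem cConst_eq_prod_Icc {ℓ : ℕ} (hℓ : 1 ≤ ℓ) :
    cConst ℓ =
      (∏ j ∈ Icc 1 (ℓ - 1), (circleHeight ℓ j + ℓ) / (circleHeight ℓ j + ℓ + 1)) / (2 * ℓ + 2) *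
        √((circleHeight ℓ 0 + ℓ) / (circleHeight ℓ 0 + ℓ + 1)) := by
  have denominator_eq : ∏ j ∈ Icc 1 ℓ, (circleHeight ℓ j + ℓ + 1) =
      (∏ j ∈ Icc 1 (ℓ - 1), (circleHeight ℓ j + ℓ + 1)) * (2 * ℓ + 2) := by
    obtain ⟨m, rfl⟩ := Nat.exists_eq_add_of_le' hℓ
    rw [prod_Icc_succ_top hℓ, circleHeight_self (by positivity), Nat.add_sub_cancel]
    ring
  calc cConst ℓ = (∏ j ∈ Icc 1 (ℓ - 1), (circleHeight ℓ j + ℓ)) /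
          (∏ j ∈ Icc 1 ℓ, (circleHeight ℓ j + ℓ + 1)) *
          √((circleHeight ℓ 0 + ℓ) / (circleHeight ℓ 0 + ℓ + 1)) := by
        simp only [cConst, circleHeight, sqrt_eq_rpow, zero_pow two_ne_zero, sub_zero]
    _ = (∏ j ∈ Icc 1 (ℓ - 1), (circleHeight ℓ j + ℓ) / (circleHeight ℓ j + ℓ + 1)) /
          (2 * ℓ + 2) * √((circleHeight ℓ 0 + ℓ) / (circleHeight ℓ 0 + ℓ + 1)) := by
        rw [denominator_eq, ← div_div, ← prod_div_distrib]

theorem cConst_eq_sqrt_two_mul_bConst {ℓ : ℕ} (hℓ : 1 ≤ ℓ) : cConst ℓ = √2 * bConst ℓ := by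
  rw [cConst_eq_prod_Icc hℓ, bConst_eq_prod_Icc hℓ, sqrt_circleHeight_zero_div ℓ.cast_nonneg]
  field_simp

/-- For every integer `ℓ ≥ 2`, `c(ℓ)/c(2) = b(ℓ)/b(2)`. -/
theorem c_ratio_eq_b_ratio (ℓ : ℕ) (hℓ : 2 ≤ ℓ) :
    cConst ℓ / cConst 2 = bConst ℓ / bConst 2 := by
  rw [cConst_eq_sqrt_two_mul_bConst (one_le_two.trans hℓ),
    cConst_eq_sqrt_two_mul_bConst one_le_two]
  exact mul_div_mul_left _ _ (sqrt_ne_zero'.mpr two_pos)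
end
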